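/- Under these hypotheses, E acts semi-regularly (freely) on D ∖ {1}; that is, for every nonidentity element v of D, the only element y of E commuting with v is y = 1. -/

import Mathlib

/-!
Let `y` be a `p'`-element commuting with some `v ≠ 1` in the normal `p`-subgroup `D`. If `y ≠ 1`,
then `v * y` is a `p`-singular element outside `D`, so at most one of the two `p`-singular classes
lies in `D`, and `v` is conjugate to an element of order `p` in the center of `D`. Hence `v` has
order `p` and `D` lies in the `p`-nilpotent group `C_G(v)`, which also contains `y`. There the
normal `p`-complement contains `y` and meets `D` trivially, so `y` centralizes `D`.
-/

/-- `p`-nilpotency: the existence of a normal `p`-complement, that is, of a normal subgroup of order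
coprime to `p` and of index a power of `p`. When `p ≠ 1`, coprimality makes that subgroup finite,
since `Nat.card` of an infinite group is `0`. -/
def IsPNilpotent (p : ℕ) (H : Type*) [Group H] : Prop :=
  ∃ N : Subgroup H, N.Normal ∧ (Nat.card N).Coprime p ∧ ∃ n : ℕ, N.index = p ^ n

/-- The conjugacy classes of `p`-singular elements of `G`, counted by `k(G) - ℓ_p(G)` when `G` is
finite. Elements of infinite order count as `p`-singular, their `orderOf` being `0`. -/
def pSingularClasses (p : ℕ) (G : Type*) [Group G] : Set (ConjClasses G) :=
  {c | ∃ g ∈ c.carrier, p ∣ orderOf g}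

section

variable {p : ℕ} {G : Type*} [Group G]

theorem orderOf_eq_of_isConj {a b : G} (h : IsConj a b) : orderOf a = orderOf b := by
  obtain ⟨g, rfl⟩ := isConj_iff.1 h
  exact ((MulAut.conj g).orderOf_eq a).symm

theorem mem_of_isConj_of_mem {N : Subgroup G} (hN : N.Normal) {a b : G} (h : IsConj a b)
    (ha : a ∈ N) : b ∈ N := by
  obtain ⟨g, rfl⟩ := isConj_iff.1 h
  exact hN.conj_mem a ha g

theorem mem_of_coprime_index_orderOf {N : Subgroup G} [N.Normal] {y : G}
    (h : N.index.Coprime (orderOf y)) : y ∈ N := by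
  obtain ⟨m, hm⟩ := exists_pow_eq_self_of_coprime h
  exact hm ▸ N.pow_mem (N.pow_index_mem y) m

theorem prime_dvd_orderOf_mul_of_commute (hp : p.Prime) {x y : G} (hxy : Commute x y)
    (hx : p ∣ orderOf x) (hy : (orderOf y).Coprime p) : p ∣ orderOf (x * y) := by
  have hlcm : orderOf x ∣ Nat.lcm (orderOf (x * y)) (orderOf y) := by
    have hcomm : Commute (x * y) y⁻¹ := (hxy.mul_left (Commute.refl y)).inv_right
    simpa using hcomm.orderOf_mul_dvd_lcm
  exact (hp.dvd_lcm.1 (hx.trans hlcm)).resolve_right (hp.coprime_iff_not_dvd.1 hy.symm)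

theorem IsPNilpotent.commute_of_isPGroup (hG : IsPNilpotent p G) {P : Subgroup G}
    (hPn : P.Normal) (hP : IsPGroup p P) {y d : G} (hy : (orderOf y).Coprime p) (hd : d ∈ P) :
    Commute y d := by
  obtain ⟨N, hN, hNp, n, hn⟩ := hG
  have hyN : y ∈ N := mem_of_coprime_index_orderOf (hn ▸ (hy.pow_right n).symm)
  have hdisj : Disjoint N P := IsPGroup.disjoint_of_coprime IsPGroup.card hP hNp
  exact Subgroup.commute_of_normal_of_disjoint N P hN hPn hdisj y d hyN hd

theorem dvd_orderOf_of_mem_of_isPGroup [Fact p.Prime] {P : Subgroup G} (hP : IsPGroup p P) {x : G}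
    (hx : x ∈ P) (hx1 : x ≠ 1) : p ∣ orderOf x := by
  simpa using hP.dvd_orderOf (g := ⟨x, hx⟩) (by simpa using hx1)

theorem exists_orderOf_eq_prime_mem_centralizer [Fact p.Prime] {P : Subgroup G} [Finite P]
    [Nontrivial P] (hP : IsPGroup p P) :
    ∃ z ∈ P, orderOf z = p ∧ z ∈ Subgroup.centralizer (P : Set G) := by
  have hcenter : Nontrivial (Subgroup.center P) := hP.center_nontrivial
  have hdvd : p ∣ Nat.card (Subgroup.center P) :=
    (hP.to_subgroup _).card_eq_or_dvd.resolve_left Finite.one_lt_card.ne'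
  obtain ⟨⟨z, hz⟩, hzp⟩ := exists_prime_orderOf_dvd_card' p hdvd
  refine ⟨z, z.2, by simpa using hzp, Subgroup.mem_centralizer_iff.2 fun d hd => ?_⟩
  exact congrArg Subtype.val (Subgroup.mem_center_iff.1 hz ⟨d, hd⟩)

theorem mk_mem_pSingularClasses {g : G} (hg : p ∣ orderOf g) :
    ConjClasses.mk g ∈ pSingularClasses p G :=
  ⟨g, ConjClasses.mem_carrier_mk, hg⟩

theorem card_conjClasses_eq_add_ncard_pSingularClasses [Finite (ConjClasses G)] :
    Nat.card (ConjClasses G) =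
      Nat.card {c : ConjClasses G // ∀ g ∈ c.carrier, ¬ p ∣ orderOf g} +
        (pSingularClasses p G).ncard := by
  have hcompl : (pSingularClasses p G)ᶜ = {c | ∀ g ∈ c.carrier, ¬ p ∣ orderOf g} := by
    ext c
    simp [pSingularClasses]
  rw [← Set.ncard_add_ncard_compl (pSingularClasses p G), hcompl, add_comm]
  rfl

theorem encard_pSingularClasses_eq_of_card_eq_add [Finite (ConjClasses G)] {n : ℕ}
    (h : Nat.card (ConjClasses G) =
      Nat.card {c : ConjClasses G // ∀ g ∈ c.carrier, ¬ p ∣ orderOf g} + n) :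
    (pSingularClasses p G).encard = n := by
  have hncard : (pSingularClasses p G).ncard = n :=
    Nat.add_left_cancel (card_conjClasses_eq_add_ncard_pSingularClasses.symm.trans h)
  rw [← hncard, (Set.toFinite _).cast_ncard_eq]

theorem isConj_of_encard_pSingularClasses_le_two (hk : (pSingularClasses p G).encard ≤ 2)
    {N : Subgroup G} (hN : N.Normal) {a b x : G} (ha : a ∈ N) (hb : b ∈ N) (hx : x ∉ N)
    (hpa : p ∣ orderOf a) (hpb : p ∣ orderOf b) (hpx : p ∣ orderOf x) : IsConj a b := by
  have hle : (pSingularClasses p G \ {ConjClasses.mk x}).encard ≤ 1 := by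
    rw [← Set.encard_sdiff_singleton_add_one (mk_mem_pSingularClasses hpx),
      ← one_add_one_eq_two] at hk
    exact (ENat.add_le_add_iff_right ENat.one_ne_top).1 hk
  have hmem {c : G} (hc : c ∈ N) (hpc : p ∣ orderOf c) :
      ConjClasses.mk c ∈ pSingularClasses p G \ {ConjClasses.mk x} :=
    ⟨mk_mem_pSingularClasses hpc, fun h =>
      hx (mem_of_isConj_of_mem hN (ConjClasses.mk_eq_mk_iff_isConj.1 h) hc)⟩
  exact ConjClasses.mk_eq_mk_iff_isConj.1
    (Set.encard_le_one_iff.1 hle _ _ (hmem ha hpa) (hmem hb hpb))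

theorem orderOf_eq_and_mem_centralizer_of_encard_pSingularClasses_le_two [Fact p.Prime]
    (hk : (pSingularClasses p G).encard ≤ 2) {D : Subgroup G} [Finite D] (hDn : D.Normal)
    (hD : IsPGroup p D) {v x : G} (hv : v ∈ D) (hv1 : v ≠ 1) (hx : x ∉ D)
    (hpx : p ∣ orderOf x) : orderOf v = p ∧ v ∈ Subgroup.centralizer (D : Set G) := by
  have : Nontrivial D := D.nontrivial_iff_exists_ne_one.2 ⟨v, hv, hv1⟩
  obtain ⟨z, hzD, hzp, hz⟩ := exists_orderOf_eq_prime_mem_centralizer hD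
  have hzv : IsConj z v :=
    isConj_of_encard_pSingularClasses_le_two hk hDn hzD hv hx hzp.symm.dvd
      (dvd_orderOf_of_mem_of_isPGroup hD hv hv1) hpx
  exact ⟨orderOf_eq_of_isConj hzv ▸ hzp, mem_of_isConj_of_mem inferInstance hzv hz⟩

theorem commute_of_isPNilpotent_centralizer {D : Subgroup G} (hDn : D.Normal)
    (hD : IsPGroup p D) {v y d : G} (hv : v ∈ Subgroup.centralizer (D : Set G))
    (hnilp : IsPNilpotent p (Subgroup.centralizer ({v} : Set G)))
    (hy : (orderOf y).Coprime p) (hyv : Commute y v) (hd : d ∈ D) : Commute y d := by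
  set C := Subgroup.centralizer ({v} : Set G)
  have hyC : y ∈ C := Subgroup.mem_centralizer_singleton_iff.2 hyv
  have hdC : d ∈ C :=
    Subgroup.mem_centralizer_singleton_iff.2 (Subgroup.mem_centralizer_iff.1 hv d hd)
  have hcomm : Commute (⟨y, hyC⟩ : C) ⟨d, hdC⟩ :=
    hnilp.commute_of_isPGroup (P := D.subgroupOf C) inferInstance hD.comap_subtype
      (by simpa using hy) hd
  exact hcomm.map C.subtype

theorem stmt_1_general [Fact p.Prime] {D : Subgroup G} [Finite D] (hDn : D.Normal)
    (hD : IsPGroup p D) (hk : (pSingularClasses p G).encard ≤ 2)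
    (hnilp : ∀ u ∈ D, orderOf u = p → IsPNilpotent p (Subgroup.centralizer ({u} : Set G)))
    {v y : G} (hv : v ∈ D) (hv1 : v ≠ 1) (hy : (orderOf y).Coprime p) (hyv : Commute y v) :
    ∀ d ∈ D, Commute y d := by
  intro d hd
  rcases eq_or_ne y 1 with rfl | hy1
  · exact Commute.one_left d
  have hp : p.Prime := Fact.out
  have hyD : y ∉ D := fun h =>
    hp.coprime_iff_not_dvd.1 hy.symm (dvd_orderOf_of_mem_of_isPGroup hD h hy1)
  have hvyD : v * y ∉ D := fun h => hyD ((D.mul_mem_cancel_left hv).1 h)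
  have hpvy : p ∣ orderOf (v * y) :=
    prime_dvd_orderOf_mul_of_commute hp hyv.symm (dvd_orderOf_of_mem_of_isPGroup hD hv hv1) hy
  obtain ⟨hvp, hvD⟩ :=
    orderOf_eq_and_mem_centralizer_of_encard_pSingularClasses_le_two hk hDn hD hv hv1 hvyD hpvy
  exact commute_of_isPNilpotent_centralizer hDn hD hvD (hnilp v hv hvp) hy hyv hd

end

/-- Hypotheses: `G` is a finite group with normal Sylow `p`-subgroup `D`, `E` is a
`p'`-complement acting faithfully on `D`, `k(G) - ℓ_p(G) = 2`, and the centralizer of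
every element of `D` of order `p` is `p`-nilpotent. -/
theorem stmt_1 {p : ℕ} (hp : p.Prime) {G : Type*} [Group G] [Fintype G]
    (D E : Subgroup G)
    (hDn : D.Normal)
    (hDpgrp : IsPGroup p D)
    (hDsyl : ¬ p ∣ D.index)
    (hEp' : Nat.Coprime (Nat.card E) p)
    (hDEinf : D ⊓ E = ⊥)
    (hDEsup : D ⊔ E = ⊤)
    (hfaith : ∀ y ∈ E, (∀ d ∈ D, y * d = d * y) → y = 1)
    (hkl : Nat.card (ConjClasses G) =
      Nat.card {c : ConjClasses G // ∀ g ∈ c.carrier, ¬ p ∣ orderOf g} + 2)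
    (hnilp : ∀ u : G, u ∈ D → orderOf u = p →
      ∃ N : Subgroup (Subgroup.centralizer ({u} : Set G)), N.Normal ∧
        Nat.Coprime (Nat.card N) p ∧ ∃ n : ℕ, N.index = p ^ n) :
    ∀ v ∈ D, v ≠ 1 → ∀ y ∈ E, y * v = v * y → y = 1 := by
  intro v hv hv1 y hy hyv
  have : Fact p.Prime := ⟨hp⟩
  have hyp : (orderOf y).Coprime p := hEp'.coprime_dvd_left (E.orderOf_dvd_natCard hy)
  exact hfaith y hy (stmt_1_general hDn hDpgrp
    (encard_pSingularClasses_eq_of_card_eq_add hkl).le hnilp hv hv1 hyp hyv)
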